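/- arXiv:1302.0084 — 2 statements merged into one kernel-verified Lean document; each statement's English description precedes it below -/
import Mathlib

section
/- Fix P > 0 and ε ∈ (0,1), and let (A_n) be a sequence of positive reals with A_n → ∞. Then there exists a sequence of (n, M_n, ε, P) codes for the AWGN channel all of whose codewords x additionally satisfy the amplitude constraint ‖x‖_∞ ≤ A_n, such that (1/n) ln M_n → (1/2) ln(1+P) as n → ∞. -/
open MeasureTheory ProbabilityTheory Filter

/-- The law of the noise vector `Z^n`: the `n`-fold product of standard Gaussians `N(0,1)`. -/
noncomputable def stdGaussianPi (n : ℕ) : Measure (Fin n → ℝ) :=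
  Measure.pi fun _ => gaussianReal 0 1

/-!
Fix `p < P`, let `Z` be the noise, and compare the outputs `x + Z` with the law `N(0, p + 1)^n`.
By Chebyshev's inequality, the information density of every single input `x` of power close to `p`
is at least `γ ≈ n C(p)` with high probability, whereas its decoding region `{density ≥ γ}` has
probability at most `e^{-γ}` under `N(0, p + 1)^n`. Feinstein's greedy selection therefore finds
about `e^γ N(0, p)^n(S)` codewords in any set `S` of such inputs: as long as the selected regions
have small probability under `N(0, p + 1)^n`, the output law of the input law `N(0, p)^n`, some
input in `S` rarely leads into them.

The amplitude constraint enters only through the mass of `S`. If `B` is large, then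
`N(0, p)([-B, B]) ≥ e^{-η}` and the second moment of `N(0, p)` conditioned on `[-B, B]` is close to
`p`, so the weak law under the conditioned law shows that the `x ∈ [-B, B]^n` of power close to `p`
have mass at least `e^{-nη} / 2`. For each rate below capacity a fixed `B` is enough, and
eventually `B ≤ A n`.
-/

open scoped NNReal Topology

section CodingLemma

variable {X Y : Type*} [MeasurableSpace Y] {W : X → Measure Y} {Q : Measure Y} {S : Set X}
  {D : X → Set Y} {δ τ b κ : ℝ}

theorem exists_greedy_codewords (hD : ∀ x, MeasurableSet (D x)) (hb : 0 ≤ b)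
    (hQD : ∀ x ∈ S, Q.real (D x) ≤ b)
    (hκ : ∀ U, MeasurableSet U → Q.real U < κ → ∃ x ∈ S, (W x).real U < τ)
    (M : ℕ) (hM : M * b < κ) :
    ∃ f : Fin M → X, ∀ i, f i ∈ S ∧ (W (f i)).real (⋃ j < i, D (f j)) < τ := by
  induction M with
  | zero => exact ⟨Fin.elim0, fun i => i.elim0⟩
  | succ M ih =>
    push_cast at hM
    obtain ⟨f, hf⟩ := ih (by linarith)
    have hcovered : Q.real (⋃ j, D (f j)) ≤ M * b := calc
      Q.real (⋃ j, D (f j)) ≤ ∑ j, Q.real (D (f j)) := measureReal_iUnion_fintype_le _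
      _ ≤ ∑ _j : Fin M, b := Finset.sum_le_sum fun j _ => hQD _ (hf j).1
      _ = M * b := by simp
    obtain ⟨x, hxS, hx⟩ := hκ _ (.iUnion fun j => hD (f j)) (by linarith)
    refine ⟨Fin.snoc f x, Fin.forall_fin_succ'.2 ⟨fun i => ?_, ?_⟩⟩
    · have hunion : ⋃ j < i.castSucc, D (Fin.snoc (α := fun _ => X) f x j) = ⋃ j < i, D (f j) := by
        ext y
        simp [Fin.exists_fin_succ', (Fin.castSucc_lt_last i).le]
      simpa [hunion] using hf i
    · have hunion : ⋃ j < Fin.last M, D (Fin.snoc (α := fun _ => X) f x j) = ⋃ j, D (f j) := by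
        ext y
        simp [Fin.exists_fin_succ', Fin.castSucc_lt_last]
      simpa [hunion] using ⟨hxS, hx⟩

theorem exists_measurable_decoder_of_pairwise_disjoint {ι : Type*} [Countable ι] [Nonempty ι]
    [MeasurableSpace ι] {E : ι → Set Y} (hE : ∀ i, MeasurableSet (E i))
    (hdisj : Pairwise (Function.onFun Disjoint E)) :
    ∃ g : Y → ι, Measurable g ∧ ∀ i, E i ⊆ g ⁻¹' {i} := by
  obtain ⟨g, hg, hgE⟩ := exists_measurable_piecewise E hE (fun i _ => i)
    (fun _ => measurable_const) fun i j hij y hy =>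
      (Set.disjoint_left.1 (hdisj hij) hy.1 hy.2).elim
  exact ⟨g, hg, fun i _ hy => hgE i hy⟩

theorem exists_code_of_mul_lt [∀ x, IsFiniteMeasure (W x)] (hD : ∀ x, MeasurableSet (D x))
    (hWD : ∀ x ∈ S, 1 - δ ≤ (W x).real (D x)) (hb : 0 ≤ b) (hQD : ∀ x ∈ S, Q.real (D x) ≤ b)
    (hκ : ∀ U, MeasurableSet U → Q.real U < κ → ∃ x ∈ S, (W x).real U < τ)
    {M : ℕ} [NeZero M] (hM : M * b < κ) :
    ∃ f : Fin M → X, ∃ g : Y → Fin M, Measurable g ∧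
      ∀ i, f i ∈ S ∧ 1 - (δ + τ) ≤ (W (f i)).real (g ⁻¹' {i}) := by
  obtain ⟨f, hf⟩ := exists_greedy_codewords hD hb hQD hκ M hM
  let E : Fin M → Set Y := disjointed fun i => D (f i)
  have hE_eq : ∀ i, E i = D (f i) \ ⋃ j < i, D (f j) := fun i => by
    simp [E, disjointed_apply, Finset.sup_eq_iSup]
  have hE : ∀ i, MeasurableSet (E i) := fun i => by
    rw [hE_eq]
    exact (hD _).diff (.iUnion fun j => .iUnion fun _ => hD _)
  obtain ⟨g, hg, hgE⟩ := exists_measurable_decoder_of_pairwise_disjoint hE (disjoint_disjointed _)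
  refine ⟨f, g, hg, fun i => ⟨(hf i).1, ?_⟩⟩
  calc 1 - (δ + τ) ≤ (W (f i)).real (D (f i)) - (W (f i)).real (⋃ j < i, D (f j)) := by
        linarith [hWD _ (hf i).1, (hf i).2]
    _ ≤ (W (f i)).real (E i) := by
        rw [hE_eq]
        exact le_measureReal_sdiff (measure_ne_top _ _)
    _ ≤ (W (f i)).real (g ⁻¹' {i}) := measureReal_mono (hgE i)

end CodingLemma

section ProductMeasures

variable {ι : Type*} [Fintype ι]

theorem pi_conv_pi {G : Type*} [AddMonoid G] [MeasurableSpace G] [MeasurableAdd₂ G]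
    (μ ν : ι → Measure G) [∀ i, IsProbabilityMeasure (μ i)] [∀ i, IsProbabilityMeasure (ν i)] :
    (Measure.pi μ).conv (Measure.pi ν) = Measure.pi fun i => (μ i).conv (ν i) := by
  have hsplit := (measurePreserving_arrowProdEquivProdArrow G G ι μ ν).map_eq
  rw [Measure.conv, ← hsplit, Measure.map_map (by fun_prop) (MeasurableEquiv.measurable _)]
  exact Measure.pi_map_pi (f := fun _ (p : G × G) => p.1 + p.2) fun _ => by fun_prop

theorem conv_apply_eq_lintegral {G : Type*} [AddMonoid G] [MeasurableSpace G] [MeasurableAdd₂ G]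
    (μ ν : Measure G) [SFinite ν] {U : Set G} (hU : MeasurableSet U) :
    (μ.conv ν) U = ∫⁻ x, ν.map (x + ·) U ∂μ := by
  rw [← lintegral_indicator_one hU, Measure.lintegral_conv (by measurability)]
  refine lintegral_congr fun x => ?_
  rw [← lintegral_map (measurable_one.indicator hU) (measurable_const_add x),
    lintegral_indicator_one hU]

theorem mul_measureReal_le_conv {G : Type*} [AddMonoid G] [MeasurableSpace G] [MeasurableAdd₂ G]
    (μ ν : Measure G) [IsFiniteMeasure μ] [IsFiniteMeasure ν] {S U : Set G} (hS : MeasurableSet S)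
    (hU : MeasurableSet U) {τ : ℝ} (h : ∀ x ∈ S, τ ≤ (ν.map (x + ·)).real U) :
    τ * μ.real S ≤ (μ.conv ν).real U := by
  rcases lt_or_ge τ 0 with hτ | hτ
  · exact (mul_nonpos_of_nonpos_of_nonneg hτ.le measureReal_nonneg).trans measureReal_nonneg
  rw [← ENNReal.toReal_ofReal hτ, Measure.real, Measure.real, ← ENNReal.toReal_mul]
  refine ENNReal.toReal_mono (measure_ne_top _ _) ?_
  calc ENNReal.ofReal τ * μ S = ∫⁻ _ in S, ENNReal.ofReal τ ∂μ := (setLIntegral_const _ _).symm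
    _ ≤ ∫⁻ x in S, ν.map (x + ·) U ∂μ :=
        setLIntegral_mono' hS fun x hx => ENNReal.ofReal_le_of_le_toReal (h x hx)
    _ ≤ ∫⁻ x, ν.map (x + ·) U ∂μ := setLIntegral_le_lintegral _ _
    _ = (μ.conv ν) U := (conv_apply_eq_lintegral μ ν hU).symm

theorem pi_cond_eq_cond_univ_pi {Ω : ι → Type*} [∀ i, MeasurableSpace (Ω i)]
    (μ : ∀ i, Measure (Ω i)) [∀ i, IsFiniteMeasure (μ i)] {s : ∀ i, Set (Ω i)}
    (hs : ∀ i, MeasurableSet (s i)) :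
    (Measure.pi fun i => (μ i)[|s i]) = (Measure.pi μ)[|Set.univ.pi s] := by
  refine Measure.pi_eq fun t _ => ?_
  rw [cond_apply (.univ_pi hs), ← Set.pi_inter_distrib, Measure.pi_pi, Measure.pi_pi]
  simp_rw [cond_apply (hs _), Finset.prod_mul_distrib]
  congr 1
  exact ENNReal.prod_inv_distrib fun i _ j _ _ => .inr (measure_ne_top (μ j) _)

theorem pi_measureReal_le_abs_sum_sub_le {Ω : ι → Type*} [∀ i, MeasurableSpace (Ω i)]
    {μ : ∀ i, Measure (Ω i)} [∀ i, IsProbabilityMeasure (μ i)] {X : ∀ i, Ω i → ℝ}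
    (hX : ∀ i, MemLp (X i) 2 (μ i)) {c : ℝ} (hc : 0 < c) :
    (Measure.pi μ).real {ω | c ≤ |∑ i, X i (ω i) - ∑ i, ∫ x, X i x ∂μ i|}
      ≤ (∑ i, Var[X i; μ i]) / c ^ 2 := by
  have hcoord : ∀ i, MemLp (fun ω : ∀ i, Ω i => X i (ω i)) 2 (Measure.pi μ) :=
    fun i => (hX i).comp_measurePreserving (measurePreserving_eval μ i)
  have hmean : ∫ ω, (∑ i, fun ω : ∀ i, Ω i => X i (ω i)) ω ∂Measure.pi μ
      = ∑ i, ∫ x, X i x ∂μ i := by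
    simp only [Finset.sum_apply]
    rw [integral_finsetSum _ fun i _ => (hcoord i).integrable one_le_two]
    exact Finset.sum_congr rfl fun i _ => integral_comp_eval (hX i).aestronglyMeasurable
  have hcheb := meas_ge_le_variance_div_sq (memLp_finsetSum' Finset.univ fun i _ => hcoord i) hc
  rw [variance_sum_pi hX, hmean] at hcheb
  simp only [Finset.sum_apply] at hcheb
  have hvar : 0 ≤ ∑ i, Var[X i; μ i] := Finset.sum_nonneg fun i _ => variance_nonneg _ _
  exact ENNReal.toReal_le_of_le_ofReal (by positivity) hcheb

theorem tendsto_pi_measureReal_le_abs_sum_sub {Ω : Type*} [MeasurableSpace Ω] {μ : Measure Ω}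
    [IsProbabilityMeasure μ] {X : Ω → ℝ} (hX : MemLp X 2 μ) {η : ℝ} (hη : 0 < η) :
    Tendsto (fun n : ℕ => (Measure.pi fun _ : Fin n => μ).real
      {ω | n * η ≤ |∑ i, X (ω i) - n * ∫ x, X x ∂μ|}) atTop (𝓝 0) := by
  have hlim : Tendsto (fun n : ℕ => Var[X; μ] / η ^ 2 / n) atTop (𝓝 0) :=
    tendsto_const_div_atTop_nhds_zero_nat _
  refine squeeze_zero' (.of_forall fun n => measureReal_nonneg) ?_ hlim
  filter_upwards [eventually_gt_atTop 0] with n hn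
  have hn' : (0 : ℝ) < n := by exact_mod_cast hn
  have hcheb := pi_measureReal_le_abs_sum_sub_le (μ := fun _ : Fin n => μ) (fun _ => hX)
    (mul_pos hn' hη)
  simp only [Finset.sum_const, Finset.card_univ, Fintype.card_fin, nsmul_eq_mul] at hcheb
  exact hcheb.trans_eq (by field_simp)

end ProductMeasures

theorem one_sub_measureReal_compl_le {Ω : Type*} [MeasurableSpace Ω] {μ : Measure Ω}
    [IsProbabilityMeasure μ] (s : Set Ω) : 1 - μ.real sᶜ ≤ μ.real s := by
  have hcover := measureReal_union_le (μ := μ) s sᶜ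
  rw [Set.union_compl_self, probReal_univ] at hcover
  linarith

theorem tendsto_integral_cond_of_aecover {α ι E : Type*} [MeasurableSpace α] {μ : Measure α}
    [IsProbabilityMeasure μ] {l : Filter ι} [l.IsCountablyGenerated] [NormedAddCommGroup E]
    [NormedSpace ℝ E] {φ : ι → Set α} (hφ : AECover μ l φ) {f : α → E} (hf : Integrable f μ) :
    Tendsto (fun i => ∫ x, f x ∂μ[|φ i]) l (𝓝 (∫ x, f x ∂μ)) := by
  have hmass : Tendsto (fun i => (μ.real (φ i))⁻¹) l (𝓝 1) := by
    simpa using (hφ.integral_tendsto_of_countably_generated (integrable_const (1 : ℝ))).inv₀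
      (by simp)
  simpa [ProbabilityTheory.cond, integral_smul_measure, ENNReal.toReal_inv, Measure.real] using
    hmass.smul (hφ.integral_tendsto_of_countably_generated hf)

section Gaussian

theorem integral_sq_gaussianReal (m : ℝ) (v : ℝ≥0) : ∫ x, x ^ 2 ∂gaussianReal m v = m ^ 2 + v := by
  have hvar := variance_eq_sub (memLp_id_gaussianReal (μ := m) (v := v) 2)
  simp only [variance_id_gaussianReal, Pi.pow_apply, id_eq, integral_id_gaussianReal] at hvar
  linarith

theorem memLp_sq_gaussianReal (m : ℝ) (v : ℝ≥0) : MemLp (fun x => x ^ 2) 2 (gaussianReal m v) := by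
  rw [memLp_two_iff_integrable_sq (by fun_prop)]
  have hfourth := (memLp_id_gaussianReal (μ := m) (v := v) (4 : ℕ)).integrable_norm_pow four_ne_zero
  refine hfourth.congr (ae_of_all _ fun x => ?_)
  simp only [id_eq, Real.norm_eq_abs, ← pow_mul]
  exact Even.pow_abs ⟨2, rfl⟩ x

theorem stdGaussianPi_real_le_abs_inner_le {n : ℕ} (x : Fin n → ℝ) {c : ℝ} (hc : 0 < c) :
    (stdGaussianPi n).real {z | c ≤ |∑ j, x j * z j|} ≤ (∑ j, x j ^ 2) / c ^ 2 := by
  have hcheb := pi_measureReal_le_abs_sum_sub_le (μ := fun _ : Fin n => gaussianReal 0 1)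
    (X := fun j z => x j * z) (fun j => (memLp_id_gaussianReal 2).const_mul (x j)) hc
  have hvar : ∀ j, Var[fun z : ℝ => x j * z; gaussianReal 0 1] = x j ^ 2 := fun j => by
    simp [variance_const_mul (x j) (fun z => z)]
  have hmean : ∀ j, ∫ z, x j * z ∂gaussianReal 0 1 = 0 := fun j => by
    rw [integral_const_mul, integral_id_gaussianReal, mul_zero]
  simpa only [stdGaussianPi, hvar, hmean, Finset.sum_const_zero, sub_zero] using hcheb

theorem measureReal_le_exp_neg_of_integral_exp_eq_one {Ω : Type*} [MeasurableSpace Ω]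
    {μ : Measure Ω} [IsFiniteMeasure μ] {X : Ω → ℝ} (hX : ∫ ω, Real.exp (X ω) ∂μ = 1) (γ : ℝ) :
    μ.real {ω | γ ≤ X ω} ≤ Real.exp (-γ) := by
  have hexp : Integrable (fun ω => Real.exp (X ω)) μ := .of_integral_ne_zero (by simp [hX])
  have hchernoff := measure_ge_le_exp_mul_mgf γ zero_le_one (by simpa only [one_mul] using hexp)
  simpa only [mgf, one_mul, hX, mul_one, neg_mul] using hchernoff

/-- The information density `log (dN(x, 1) / dN(0, v))` at `y` between the input `x` of a
unit-variance Gaussian channel and its output `y`, for the output law `N(0, v)`. -/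
noncomputable def infoDensity (v : ℝ≥0) (x y : ℝ) : ℝ :=
  1 / 2 * Real.log v - (y - x) ^ 2 / 2 + y ^ 2 / (2 * v)

@[fun_prop]
theorem measurable_infoDensity (v : ℝ≥0) (x : ℝ) : Measurable (infoDensity v x) := by
  unfold infoDensity
  fun_prop

theorem gaussianPDFReal_mul_exp_infoDensity {v : ℝ≥0} (hv : v ≠ 0) (x y : ℝ) :
    gaussianPDFReal 0 v y * Real.exp (infoDensity v x y) = gaussianPDFReal x 1 y := by
  have hv' : (0 : ℝ) < v := by positivity
  have hsqrt : Real.exp (1 / 2 * Real.log v) = √(v : ℝ) := by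
    rw [Real.sqrt_eq_rpow, Real.rpow_def_of_pos hv', mul_comm]
  simp only [gaussianPDFReal, infoDensity, Real.exp_add, Real.exp_sub, hsqrt, sub_zero, neg_div,
    Real.exp_neg, NNReal.coe_one, mul_one, Real.sqrt_mul' _ hv'.le]
  field_simp

theorem integral_exp_infoDensity {v : ℝ≥0} (hv : v ≠ 0) (x : ℝ) :
    ∫ y, Real.exp (infoDensity v x y) ∂gaussianReal 0 v = 1 := by
  simp_rw [integral_gaussianReal_eq_integral_smul hv, smul_eq_mul,
    gaussianPDFReal_mul_exp_infoDensity hv, integral_gaussianPDFReal_eq_one x one_ne_zero]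

variable {ι : Type*} [Fintype ι]

theorem pi_gaussianReal_real_le_sum_infoDensity_le {v : ℝ≥0} (hv : v ≠ 0) (x : ι → ℝ) (γ : ℝ) :
    (Measure.pi fun _ => gaussianReal 0 v).real {y | γ ≤ ∑ j, infoDensity v (x j) (y j)}
      ≤ Real.exp (-γ) := by
  refine measureReal_le_exp_neg_of_integral_exp_eq_one ?_ γ
  simp_rw [Real.exp_sum,
    integral_fintype_prod_eq_prod (fun j y => Real.exp (infoDensity v (x j) y)),
    integral_exp_infoDensity hv, Finset.prod_const_one]

theorem sum_infoDensity_add (p : ℝ≥0) (x z : ι → ℝ) :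
    ∑ j, infoDensity (p + 1) (x j) (x j + z j) =
      Fintype.card ι * (1 / 2 * Real.log (1 + p)) +
        (∑ j, x j ^ 2 + 2 * ∑ j, x j * z j - p * ∑ j, z j ^ 2) / (2 * (p + 1)) := by
  have hletter : ∀ j, infoDensity (p + 1) (x j) (x j + z j) =
      1 / 2 * Real.log (1 + p) + (x j ^ 2 + 2 * (x j * z j) - p * z j ^ 2) / (2 * (p + 1)) := by
    intro j
    simp only [infoDensity, NNReal.coe_add, NNReal.coe_one, add_comm (1 : ℝ)]
    field_simp
    ring
  simp_rw [hletter, Finset.sum_add_distrib, ← Finset.sum_div, Finset.sum_sub_distrib,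
    Finset.sum_add_distrib, ← Finset.mul_sum]
  rw [Finset.sum_const, Finset.card_univ, nsmul_eq_mul]
  ring

theorem le_sum_infoDensity_add (p : ℝ≥0) {η : ℝ} (hη : 0 ≤ η) {x z : ι → ℝ}
    (hx : Fintype.card ι * (p - η) ≤ ∑ j, x j ^ 2)
    (hz : ∑ j, z j ^ 2 ≤ Fintype.card ι * (1 + η))
    (hxz : -(Fintype.card ι * η) ≤ ∑ j, x j * z j) :
    Fintype.card ι * (1 / 2 * Real.log (1 + p) - 2 * η) ≤
      ∑ j, infoDensity (p + 1) (x j) (x j + z j) := by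
  have hdev : -(2 * η * Fintype.card ι) ≤
      (∑ j, x j ^ 2 + 2 * ∑ j, x j * z j - p * ∑ j, z j ^ 2) / (2 * (p + 1)) := by
    rw [le_div_iff₀ (by positivity)]
    have hpz : p * ∑ j, z j ^ 2 ≤ p * (Fintype.card ι * (1 + η)) := by gcongr
    have hnonneg : 0 ≤ η * Fintype.card ι := by positivity
    have hnonneg' : 0 ≤ η * Fintype.card ι * p := by positivity
    linarith
  rw [sum_infoDensity_add]
  linarith

end Gaussian

/-- The power shell: vectors of length `n` whose average power per coordinate is within `η` of `p`.
On it the information density is controlled uniformly in the input. -/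
def powerShell (n : ℕ) (p η : ℝ) : Set (Fin n → ℝ) :=
  {x | |∑ j, x j ^ 2 - n * p| ≤ n * η}

theorem measurableSet_powerShell (n : ℕ) (p η : ℝ) : MeasurableSet (powerShell n p η) :=
  measurableSet_le (by fun_prop) measurable_const

section PowerShell

variable {n : ℕ} {p η : ℝ} {x : Fin n → ℝ}

theorem mem_powerShell : x ∈ powerShell n p η ↔ |∑ j, x j ^ 2 - n * p| ≤ n * η := Iff.rfl

theorem sum_sq_le_of_mem_powerShell (hx : x ∈ powerShell n p η) : ∑ j, x j ^ 2 ≤ n * (p + η) := by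
  linarith [(abs_le.1 (mem_powerShell.1 hx)).2]

theorem le_sum_sq_of_mem_powerShell (hx : x ∈ powerShell n p η) : n * (p - η) ≤ ∑ j, x j ^ 2 := by
  linarith [(abs_le.1 (mem_powerShell.1 hx)).1]

end PowerShell

section Truncation

theorem eventually_half_pow_le_pi_real_inter {Ω : Type*} [MeasurableSpace Ω] {μ : Measure Ω}
    [IsProbabilityMeasure μ] {K : Set Ω} (hK : MeasurableSet K) (hμK : μ K ≠ 0) {f : Ω → ℝ}
    (hf : MemLp f 2 μ[|K]) {η : ℝ} (hη : 0 < η) :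
    ∀ᶠ n : ℕ in atTop, μ.real K ^ n / 2 ≤ (Measure.pi fun _ : Fin n => μ).real
      ((Set.univ.pi fun _ => K) ∩ {ω | |∑ i, f (ω i) - n * ∫ x, f x ∂μ[|K]| < n * η}) := by
  have := cond_isProbabilityMeasure hμK
  filter_upwards [(tendsto_pi_measureReal_le_abs_sum_sub hf hη).eventually_le_const
    (show (0 : ℝ) < 1 / 2 by norm_num)] with n hn
  set T := {ω : Fin n → Ω | |∑ i, f (ω i) - n * ∫ x, f x ∂μ[|K]| < n * η} with hT
  have hTc : {ω : Fin n → Ω | n * η ≤ |∑ i, f (ω i) - n * ∫ x, f x ∂μ[|K]|} = Tᶜ := by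
    ext ω
    simp [hT]
  have htypical : 1 / 2 ≤ (Measure.pi fun _ : Fin n => μ[|K]).real T := by
    refine le_trans ?_ (one_sub_measureReal_compl_le T)
    rw [← hTc]
    linarith
  have hbox : (Measure.pi fun _ : Fin n => μ).real (Set.univ.pi fun _ => K) = μ.real K ^ n := by
    simp [Measure.real, Measure.pi_pi]
  have hinter : (Measure.pi fun _ : Fin n => μ[|K]).real T *
      (Measure.pi fun _ : Fin n => μ).real (Set.univ.pi fun _ => K) =
        (Measure.pi fun _ : Fin n => μ).real ((Set.univ.pi fun _ => K) ∩ T) := by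
    simp only [Measure.real, ← ENNReal.toReal_mul, pi_cond_eq_cond_univ_pi _ fun _ => hK,
      cond_mul_eq_inter (.univ_pi fun _ => hK)]
  rw [← hinter, hbox, div_eq_inv_mul, ← one_div]
  gcongr

theorem eventually_exp_neg_div_two_le_pi_real_closedBall_inter_powerShell {μ : Measure ℝ}
    [IsProbabilityMeasure μ] (hμ : Integrable (fun x => x ^ 2) μ) {η : ℝ} (hη : 0 < η) :
    ∃ B, ∀ᶠ n : ℕ in atTop, Real.exp (-(n * η)) / 2 ≤ (Measure.pi fun _ : Fin n => μ).real
      (Metric.closedBall 0 B ∩ powerShell n (∫ x, x ^ 2 ∂μ) η) := by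
  have hcover : AECover μ atTop (Metric.closedBall (0 : ℝ)) := aecover_closedBall tendsto_id
  have hmass : Tendsto (fun B => μ.real (Metric.closedBall 0 B)) atTop (𝓝 1) := by
    simpa using hcover.integral_tendsto_of_countably_generated (integrable_const (1 : ℝ))
  have hmoment := (tendsto_integral_cond_of_aecover hcover hμ).eventually
    (Metric.closedBall_mem_nhds _ (half_pos hη))
  obtain ⟨B, hBmass, hBmoment, hB⟩ := ((hmass.eventually_const_le (u := Real.exp (-η))
    (by simpa using hη)).and (hmoment.and (eventually_ge_atTop 0))).exists
  rw [Real.dist_eq] at hBmoment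
  have hBpos : μ (Metric.closedBall 0 B) ≠ 0 := fun h => by
    simp [Measure.real, h, (Real.exp_pos _).not_ge] at hBmass
  have := cond_isProbabilityMeasure hBpos
  have hmem : MemLp (fun x : ℝ => x ^ 2) 2 μ[|Metric.closedBall 0 B] := by
    refine MemLp.of_bound (by fun_prop) (B ^ 2)
      ((ae_cond_mem Metric.isClosed_closedBall.measurableSet).mono fun x hx => ?_)
    rw [norm_pow]
    gcongr
    simpa using hx
  refine ⟨B, ?_⟩
  filter_upwards [eventually_half_pow_le_pi_real_inter Metric.isClosed_closedBall.measurableSet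
    hBpos hmem (half_pos hη)] with n hn
  calc Real.exp (-(n * η)) / 2 = Real.exp (-η) ^ n / 2 := by rw [← Real.exp_nat_mul, mul_neg]
    _ ≤ μ.real (Metric.closedBall 0 B) ^ n / 2 := by gcongr
    _ ≤ _ := hn
    _ ≤ _ := by
      refine measureReal_mono (Set.inter_subset_inter (closedBall_pi _ hB).ge fun x hx => ?_)
      have hcenter : |n * ∫ x, x ^ 2 ∂μ[|Metric.closedBall 0 B] - n * ∫ x, x ^ 2 ∂μ|
          ≤ n * (η / 2) := by
        rw [← mul_sub, abs_mul, Nat.abs_cast]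
        gcongr
      have hx' : |∑ i, x i ^ 2 - n * ∫ x, x ^ 2 ∂μ[|Metric.closedBall 0 B]| < n * (η / 2) := hx
      have htri := abs_sub_le (∑ i, x i ^ 2) (n * ∫ x, x ^ 2 ∂μ[|Metric.closedBall 0 B])
        (n * ∫ x, x ^ 2 ∂μ)
      rw [mem_powerShell]
      linarith

end Truncation

instance (n : ℕ) : IsProbabilityMeasure (stdGaussianPi n) :=
  inferInstanceAs (IsProbabilityMeasure (Measure.pi fun _ => gaussianReal 0 1))

theorem stdGaussianPi_real_sum_infoDensity_lt_le {n : ℕ} {p : ℝ≥0} {η : ℝ} (hη : 0 ≤ η)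
    {x : Fin n → ℝ} (hx : x ∈ powerShell n p η) :
    (stdGaussianPi n).real
        {z | ∑ j, infoDensity (p + 1) (x j) (x j + z j) < n * (1 / 2 * Real.log (1 + p) - 2 * η)}
      ≤ (stdGaussianPi n).real {z | n * η ≤ |∑ j, z j ^ 2 - n|} +
        (stdGaussianPi n).real {z | n * η ≤ |∑ j, x j * z j|} := by
  refine (measureReal_mono fun z hz => ?_).trans (measureReal_union_le _ _)
  by_contra hgood
  simp only [Set.mem_union, Set.mem_ofPred_eq, not_or, not_le, abs_lt] at hz hgood
  have hinfo := le_sum_infoDensity_add p hη (x := x) (z := z)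
  simp only [Fintype.card_fin] at hinfo
  refine hz.not_ge (hinfo (le_sum_sq_of_mem_powerShell hx) ?_ ?_)
  · linarith [hgood.1.2]
  · linarith [hgood.2.1]

theorem eventually_forall_mem_powerShell_le_sum_infoDensity (p : ℝ≥0) {η δ : ℝ} (hη : 0 < η)
    (hδ : 0 < δ) :
    ∀ᶠ n : ℕ in atTop, ∀ x ∈ powerShell n p η,
      1 - δ ≤ (stdGaussianPi n).real {z |
        n * (1 / 2 * Real.log (1 + p) - 2 * η) ≤ ∑ j, infoDensity (p + 1) (x j) (x j + z j)} := by
  have hnoise : Tendsto (fun n : ℕ => (stdGaussianPi n).real {z | n * η ≤ |∑ j, z j ^ 2 - n|})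
      atTop (𝓝 0) := by
    simpa only [stdGaussianPi, integral_sq_gaussianReal, NNReal.coe_one, zero_pow two_ne_zero,
      zero_add, mul_one] using
      tendsto_pi_measureReal_le_abs_sum_sub (memLp_sq_gaussianReal 0 1) hη
  have hcross : Tendsto (fun n : ℕ => (p + η) / η ^ 2 / n) atTop (𝓝 0) :=
    tendsto_const_div_atTop_nhds_zero_nat _
  filter_upwards [hnoise.eventually_le_const (half_pos hδ),
    hcross.eventually_le_const (half_pos hδ), eventually_gt_atTop 0]
    with n hn_noise hn_cross hn x hx
  have hn' : (0 : ℝ) < n := by exact_mod_cast hn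
  have hinner : (stdGaussianPi n).real {z | n * η ≤ |∑ j, x j * z j|} ≤ δ / 2 := calc
    _ ≤ (∑ j, x j ^ 2) / (n * η) ^ 2 := stdGaussianPi_real_le_abs_inner_le x (mul_pos hn' hη)
    _ ≤ n * (p + η) / (n * η) ^ 2 := by gcongr; exact sum_sq_le_of_mem_powerShell hx
    _ = (p + η) / η ^ 2 / n := by field_simp
    _ ≤ δ / 2 := hn_cross
  have hbad := stdGaussianPi_real_sum_infoDensity_lt_le hη.le hx
  refine le_trans ?_ (one_sub_measureReal_compl_le _)
  simp only [Set.compl_ofPred, not_le]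
  linarith

/-- There is a code of block length `n` with `M` messages, power `P`, amplitude `A` and average
error probability at most `ε` for the additive white Gaussian noise channel. The case `M = 0` is
void since there is no decoder into `Fin 0`. -/
def HasAmplitudeCode (P ε A : ℝ) (n M : ℕ) : Prop :=
  ∃ f : Fin M → (Fin n → ℝ), ∃ g : (Fin n → ℝ) → Fin M,
    Measurable g ∧
    (∀ i, ∑ j, (f i j) ^ 2 ≤ n * P) ∧
    (∀ i, ‖f i‖ ≤ A) ∧
    (1 / M : ℝ) * ∑ i, ((stdGaussianPi n) {z | g (f i + z) ≠ i}).toReal ≤ ε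

section Codes

variable {P ε A : ℝ} {n M : ℕ}

theorem hasAmplitudeCode_of_forall_le [NeZero M] {f : Fin M → Fin n → ℝ}
    {g : (Fin n → ℝ) → Fin M} (hg : Measurable g) (hpow : ∀ i, ∑ j, f i j ^ 2 ≤ n * P)
    (hamp : ∀ i, ‖f i‖ ≤ A)
    (hcorrect : ∀ i, 1 - ε ≤ ((stdGaussianPi n).map (f i + ·)).real (g ⁻¹' {i})) :
    HasAmplitudeCode P ε A n M := by
  refine ⟨f, g, hg, hpow, hamp, ?_⟩
  have herror : ∀ i, (stdGaussianPi n).real {z | g (f i + z) ≠ i} ≤ ε := fun i => by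
    have hg_i : MeasurableSet (g ⁻¹' {i}) := hg (measurableSet_singleton i)
    have hcorrect_i := hcorrect i
    rw [map_measureReal_apply (measurable_const_add _) hg_i] at hcorrect_i
    calc (stdGaussianPi n).real ((f i + ·) ⁻¹' (g ⁻¹' {i}))ᶜ
        = 1 - (stdGaussianPi n).real ((f i + ·) ⁻¹' (g ⁻¹' {i})) :=
          probReal_compl_eq_one_sub (measurable_const_add _ hg_i)
      _ ≤ ε := by linarith
  have hM : (0 : ℝ) < M := by exact_mod_cast NeZero.pos M
  calc (1 / M : ℝ) * ∑ i, (stdGaussianPi n).real {z | g (f i + z) ≠ i}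
      ≤ 1 / M * ∑ _i : Fin M, ε := by gcongr with i; exact herror i
    _ = ε := by
      simp only [Finset.sum_const, Finset.card_univ, Fintype.card_fin, nsmul_eq_mul]
      field_simp

theorem hasAmplitudeCode_one (hP : 0 ≤ P) (hε : 0 ≤ ε) (hA : 0 ≤ A) :
    HasAmplitudeCode P ε A n 1 :=
  ⟨0, 0, measurable_const, by simpa using by positivity, by simpa using hA,
    by simpa [Subsingleton.elim _ (0 : Fin 1)] using hε⟩

theorem hasAmplitudeCode_of_mul_exp_lt [NeZero M] {S : Set (Fin n → ℝ)} (hS : MeasurableSet S)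
    (hpow : ∀ x ∈ S, ∑ j, x j ^ 2 ≤ n * P) (hamp : ∀ x ∈ S, ‖x‖ ≤ A) (p : ℝ≥0) {γ : ℝ}
    (hinfo : ∀ x ∈ S, 1 - ε / 2 ≤
      (stdGaussianPi n).real {z | γ ≤ ∑ j, infoDensity (p + 1) (x j) (x j + z j)})
    (hM : M * Real.exp (-γ) < ε / 2 * (Measure.pi fun _ => gaussianReal 0 p).real S) :
    HasAmplitudeCode P ε A n M := by
  let W (x : Fin n → ℝ) : Measure (Fin n → ℝ) := (stdGaussianPi n).map (x + ·)
  let Q : Measure (Fin n → ℝ) := Measure.pi fun _ => gaussianReal 0 (p + 1)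
  let D (x : Fin n → ℝ) : Set (Fin n → ℝ) := {y | γ ≤ ∑ j, infoDensity (p + 1) (x j) (y j)}
  have hD : ∀ x, MeasurableSet (D x) := fun x => measurableSet_le measurable_const (by fun_prop)
  have hQ : (Measure.pi fun _ => gaussianReal 0 p).conv (stdGaussianPi n) = Q := by
    simp only [stdGaussianPi, pi_conv_pi, gaussianReal_conv_gaussianReal, zero_add, Q]
  have hWD : ∀ x ∈ S, 1 - ε / 2 ≤ (W x).real (D x) := fun x hx => by
    rw [map_measureReal_apply (measurable_const_add x) (hD x)]
    exact hinfo x hx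
  have hκ : ∀ U, MeasurableSet U →
      Q.real U < ε / 2 * (Measure.pi fun _ => gaussianReal 0 p).real S →
      ∃ x ∈ S, (W x).real U < ε / 2 := fun U hU hQU => by
    by_contra! hcover
    rw [← hQ] at hQU
    exact hQU.not_ge (mul_measureReal_le_conv _ _ hS hU hcover)
  have : ∀ x, IsFiniteMeasure (W x) := fun x => inferInstance
  obtain ⟨f, g, hg, hfg⟩ := exists_code_of_mul_lt hD hWD (Real.exp_pos _).le
    (fun x _ => pi_gaussianReal_real_le_sum_infoDensity_le (by positivity) x γ) hκ hM
  refine hasAmplitudeCode_of_forall_le hg (fun i => hpow _ (hfg i).1) (fun i => hamp _ (hfg i).1)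
    fun i => ?_
  simpa only [add_halves] using (hfg i).2

end Codes

section Rates

theorem natCeil_exp_le_two_mul_exp {a : ℝ} (ha : 0 ≤ a) : ⌈Real.exp a⌉₊ ≤ 2 * Real.exp a :=
  Nat.ceil_le_two_mul (by linarith [Real.one_le_exp ha])

theorem tendsto_log_natCeil_exp {R : ℝ} (hR : 0 ≤ R) :
    Tendsto (fun n : ℕ => (1 / n : ℝ) * Real.log ⌈Real.exp (n * R)⌉₊) atTop (𝓝 R) := by
  have hupper : Tendsto (fun n : ℕ => R + Real.log 2 / n) atTop (𝓝 R) := by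
    simpa using (tendsto_const_div_atTop_nhds_zero_nat (Real.log 2)).const_add R
  refine tendsto_of_tendsto_of_tendsto_of_le_of_le' tendsto_const_nhds hupper ?_ ?_
  · filter_upwards [eventually_gt_atTop 0] with n hn
    have hlog := Real.log_le_log (Real.exp_pos _) (Nat.le_ceil (Real.exp (n * R)))
    rw [Real.log_exp] at hlog
    rwa [one_div, le_inv_mul_iff₀ (by positivity)]
  · filter_upwards [eventually_gt_atTop 0] with n hn
    have hceil : (0 : ℝ) < ⌈Real.exp (n * R)⌉₊ := by positivity
    have hlog := Real.log_le_log hceil (natCeil_exp_le_two_mul_exp (by positivity))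
    rw [Real.log_mul two_ne_zero (Real.exp_ne_zero _), Real.log_exp] at hlog
    calc (1 / n : ℝ) * Real.log ⌈Real.exp (n * R)⌉₊ ≤ 1 / n * (Real.log 2 + n * R) := by gcongr
      _ = R + Real.log 2 / n := by field_simp; ring

theorem exists_tendsto_rate_of_forall_lt {code : ℕ → ℕ → Prop} {C : ℝ} (hC : 0 < C)
    (hone : ∀ n, code n 1)
    (hcode : ∀ R, 0 ≤ R → R < C → ∀ᶠ n : ℕ in atTop, code n ⌈Real.exp (n * R)⌉₊) :
    ∃ M : ℕ → ℕ, (∀ n, code n (M n)) ∧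
      Tendsto (fun n : ℕ => (1 / n : ℝ) * Real.log (M n)) atTop (𝓝 C) := by
  classical
  let M (n : ℕ) : ℕ := Nat.findGreatest (code n) ⌈Real.exp (n * C)⌉₊
  have hM : ∀ n, code n (M n) := fun n =>
    Nat.findGreatest_spec (Nat.one_le_ceil_iff.2 (Real.exp_pos _)) (hone n)
  have hM_mono : ∀ {n m m' : ℕ}, 0 < m → m ≤ m' →
      (1 / n : ℝ) * Real.log m ≤ (1 / n : ℝ) * Real.log m' := fun hm hmm' => by gcongr
  have hM_pos : ∀ n, 0 < M n := fun n =>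
    Nat.le_findGreatest (Nat.one_le_ceil_iff.2 (Real.exp_pos _)) (hone n)
  refine ⟨M, hM, tendsto_order.2 ⟨fun a ha => ?_, fun b hb => ?_⟩⟩
  · obtain ⟨R, hR, hRC⟩ := exists_between (max_lt ha hC)
    obtain ⟨haR, hR0⟩ := max_lt_iff.1 hR
    filter_upwards [hcode R hR0.le hRC, (tendsto_log_natCeil_exp hR0.le).eventually_const_lt haR]
      with n hn han
    refine han.trans_le (hM_mono (Nat.ceil_pos.2 (Real.exp_pos _)) (Nat.le_findGreatest ?_ hn))
    gcongr
  · filter_upwards [(tendsto_log_natCeil_exp hC.le).eventually_lt_const hb] with n hn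
    exact (hM_mono (hM_pos n) (Nat.findGreatest_le _)).trans_lt hn

end Rates

theorem exists_pos_add_le_and_add_lt_log {P R : ℝ} (hP : 0 < P)
    (hRP : R < 1 / 2 * Real.log (1 + P)) :
    ∃ p : ℝ≥0, ∃ η > 0, p + η ≤ P ∧ R + 3 * η < 1 / 2 * Real.log (1 + p) := by
  have hleft : Tendsto (fun η : ℝ => R + 3 * η) (𝓝[>] 0) (𝓝 R) :=
    tendsto_nhdsWithin_of_tendsto_nhds (Continuous.tendsto' (by fun_prop) _ _ (by simp))
  have hright : Tendsto (fun η : ℝ => 1 / 2 * Real.log (1 + (P - η))) (𝓝[>] 0)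
      (𝓝 (1 / 2 * Real.log (1 + P))) := by
    have hcont : ContinuousAt (fun η : ℝ => 1 / 2 * Real.log (1 + (P - η))) 0 := by
      fun_prop (disch := rw [sub_zero]; positivity)
    simpa using tendsto_nhdsWithin_of_tendsto_nhds hcont.tendsto
  obtain ⟨η, hlt, hη, hηP⟩ :=
    ((hleft.eventually_lt hright hRP).and (Ioc_mem_nhdsGT hP)).exists
  exact ⟨⟨P - η, sub_nonneg.2 hηP⟩, η, hη, (sub_add_cancel P η).le, hlt⟩

theorem eventually_hasAmplitudeCode {P ε R : ℝ} (hP : 0 < P) (hε : 0 < ε) (hR : 0 ≤ R)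
    (hRP : R < 1 / 2 * Real.log (1 + P)) {A : ℕ → ℝ} (hA : Tendsto A atTop atTop) :
    ∀ᶠ n : ℕ in atTop, HasAmplitudeCode P ε (A n) n ⌈Real.exp (n * R)⌉₊ := by
  obtain ⟨p, η, hη, hpη, hgap⟩ := exists_pos_add_le_and_add_lt_log hP hRP
  obtain ⟨B, hB⟩ := eventually_exp_neg_div_two_le_pi_real_closedBall_inter_powerShell
    (memLp_id_gaussianReal (μ := 0) (v := p) 2).integrable_sq hη
  have hgrowth : ∀ᶠ n : ℕ in atTop,
      8 / ε < Real.exp (n * (1 / 2 * Real.log (1 + p) - (R + 3 * η))) :=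
    (Real.tendsto_exp_atTop.comp
      (tendsto_natCast_atTop_atTop.atTop_mul_const (sub_pos.2 hgap))).eventually_gt_atTop _
  filter_upwards [hB, hgrowth, hA.eventually_ge_atTop B,
    eventually_forall_mem_powerShell_le_sum_infoDensity p hη (half_pos hε)]
    with n hmass hn hBA hinfo
  simp only [integral_sq_gaussianReal, zero_pow two_ne_zero, zero_add] at hmass
  have : NeZero ⌈Real.exp (n * R)⌉₊ := ⟨by positivity⟩
  refine hasAmplitudeCode_of_mul_exp_lt
    (Metric.isClosed_closedBall.measurableSet.inter (measurableSet_powerShell n p η))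
    (fun x hx => (sum_sq_le_of_mem_powerShell hx.2).trans (by gcongr))
    (fun x hx => (mem_closedBall_zero_iff.1 hx.1).trans hBA) p (fun x hx => hinfo x hx.2) ?_
  set γ : ℝ := n * (1 / 2 * Real.log (1 + p) - 2 * η)
  have hsplit : Real.exp (n * (1 / 2 * Real.log (1 + p) - (R + 3 * η))) =
      Real.exp (-(n * η)) / (Real.exp (n * R) * Real.exp (-γ)) := by
    rw [← Real.exp_add, ← Real.exp_sub]
    congr 1
    ring
  rw [hsplit, div_lt_div_iff₀ hε (by positivity)] at hn
  calc ⌈Real.exp (n * R)⌉₊ * Real.exp (-γ) ≤ 2 * Real.exp (n * R) * Real.exp (-γ) := by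
        gcongr
        exact natCeil_exp_le_two_mul_exp (by positivity)
    _ < ε / 2 * (Real.exp (-(n * η)) / 2) := by linarith
    _ ≤ _ := by gcongr

/-- For `P > 0`, `ε ∈ (0,1)` and any positive sequence `A n → ∞`, there is a
sequence of `(n, Mₙ, ε, P)` codes for the AWGN channel whose codewords all satisfy the amplitude
constraint `‖x‖_∞ ≤ A n` (the sup norm on `Fin n → ℝ` is the norm of the Pi type), and whose
rate `(1/n) ln Mₙ` converges to the capacity `(1/2) ln (1+P)`. -/
theorem papr_capacity_achievable_with_slowly_growing_amplitude
    (P : ℝ) (hP : 0 < P) (ε : ℝ) (hε : ε ∈ Set.Ioo (0 : ℝ) 1)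
    (A : ℕ → ℝ) (hApos : ∀ n, 0 < A n) (hA : Tendsto A atTop atTop) :
    ∃ M : ℕ → ℕ,
      (∀ n : ℕ, ∃ f : Fin (M n) → (Fin n → ℝ), ∃ g : (Fin n → ℝ) → Fin (M n),
        Measurable g ∧
        (∀ i, ∑ j, (f i j) ^ 2 ≤ n * P) ∧
        (∀ i, ‖f i‖ ≤ A n) ∧
        (1 / (M n) : ℝ) * ∑ i, ((stdGaussianPi n) {z | g (f i + z) ≠ i}).toReal ≤ ε) ∧
      Tendsto (fun n : ℕ => (1 / n : ℝ) * Real.log (M n)) atTop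
        (nhds ((1 / 2) * Real.log (1 + P))) := by
  have hcapacity : 0 < 1 / 2 * Real.log (1 + P) :=
    mul_pos one_half_pos (Real.log_pos (lt_add_of_pos_right 1 hP))
  exact exists_tendsto_rate_of_forall_lt (code := fun n => HasAmplitudeCode P ε (A n) n) hcapacity
    (fun n => hasAmplitudeCode_one hP.le hε.1.le (hApos n).le)
    fun R hR hRP => eventually_hasAmplitudeCode hP hε.1 hR hRP hA
end

section
/- Fix P > 0. There exist constants c > 0 and A₀ > 0 such that for all A ≥ A₀, the gap (1/2) ln(1+P) − C(A,P) between the unconstrained AWGN capacity and the amplitude-constrained capacity satisfies (1/2) ln(1+P) − C(A,P) ≥ c · A^{−2} · exp( −A² / (√(1+P) − 1)² ). -/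
open MeasureTheory ProbabilityTheory

open scoped Classical in
/-- Kullback–Leibler divergence (natural logarithm), valued in `EReal`:
`D(μ‖ν) = ∫ log(dμ/dν) dμ` if `μ ≪ ν` and the log-likelihood ratio is integrable,
and `+∞` otherwise. -/
noncomputable def klDiv {α : Type*} [MeasurableSpace α] (μ ν : Measure α) : EReal :=
  if μ ≪ ν ∧ Integrable (llr μ ν) μ then ((∫ x, llr μ ν x ∂μ : ℝ) : EReal) else ⊤

/-- The joint law of `(X, X+Z)` where `X ~ μ` and `Z ~ N(0,1)` is independent of `X`. -/
noncomputable def jointLaw (μ : Measure ℝ) : Measure (ℝ × ℝ) :=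
  (μ.prod (gaussianReal 0 1)).map fun p => (p.1, p.1 + p.2)

/-- The mutual information `I(X; X+Z)` for `X ~ μ` and `Z ~ N(0,1)` independent of `X`:
the KL divergence between the joint law of `(X, X+Z)` and the product of its marginals. -/
noncomputable def mutInfo (μ : Measure ℝ) : EReal :=
  klDiv (jointLaw μ) ((jointLaw μ).fst.prod (jointLaw μ).snd)

/-- The amplitude-constrained AWGN capacity `C(A,P)`: the supremum of `I(X; X+Z)` over laws of
real random variables `X` with `|X| ≤ A` almost surely and `E[X²] ≤ P`, with `Z ~ N(0,1)`
independent of `X`. -/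
noncomputable def CAP (A P : ℝ) : EReal :=
  ⨆ μ ∈ {μ : Measure ℝ | IsProbabilityMeasure μ ∧ μ {x | A < |x|} = 0 ∧ ∫ x, x ^ 2 ∂μ ≤ P},
    mutInfo μ

/-!
For `X ~ μ` and `Y = X + Z`, mutual information differs from a relative entropy by moments only:
`I(X; Y) = (1/2) ln v + (E[X²] + 1 - v) / (2v) - D(P_Y ‖ N(0,v))` for every `v > 0`. At `v = 1 + P`
the capacity gap is thus at least the infimum of `D(P_Y ‖ N(0,1+P))` over admissible inputs.

If `|X| ≤ A`, the density of `Y` at `y ≥ A` is at most that of `N(A,1)`. With `s = √(1+P)`, the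
latter drops below a quarter of the density of `N(0,s²)` shortly after the crossover point
`A s / (s - 1)`. So `P_Y` gives a set `T` beyond that point at most a quarter of its mass `q` under
`N(0,s²)`, and this alone forces the divergence to be at least `q / 4`. Taking for `T` an interval
of length `1 / A` keeps the Gaussian density on it, up to a constant factor, equal to its value
`exp(-A² / (2 (s - 1)²))` at the crossover.
-/

open scoped NNReal

section RelativeEntropy

variable {α : Type*} [MeasurableSpace α]

lemma klDiv_withDensity_withDensity {ν : Measure α} [SigmaFinite ν] {f g : α → ℝ}
    (hf : Measurable f) (hg : Measurable g) (hf_pos : ∀ x, 0 < f x) (hg_pos : ∀ x, 0 < g x)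
    (hfg : Integrable (fun x ↦ Real.log (f x) - Real.log (g x))
      (ν.withDensity fun x ↦ ENNReal.ofReal (f x))) :
    klDiv (ν.withDensity fun x ↦ ENNReal.ofReal (f x)) (ν.withDensity fun x ↦ ENNReal.ofReal (g x))
      = ((∫ x, (Real.log (f x) - Real.log (g x)) ∂ν.withDensity fun x ↦ ENNReal.ofReal (f x) : ℝ)
        : EReal) := by
  set μ₁ := ν.withDensity fun x ↦ ENNReal.ofReal (f x) with hμ₁
  set μ₂ := ν.withDensity fun x ↦ ENNReal.ofReal (g x) with hμ₂
  have hratio : μ₁ = μ₂.withDensity fun x ↦ ENNReal.ofReal (f x / g x) := by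
    rw [hμ₁, hμ₂, ← withDensity_mul _ (by fun_prop) (by fun_prop)]
    congr 1 with x
    rw [Pi.mul_apply, ← ENNReal.ofReal_mul (hg_pos x).le, mul_div_cancel₀ _ (hg_pos x).ne']
  have hac : μ₁ ≪ μ₂ := hratio ▸ withDensity_absolutelyContinuous _ _
  have hllr : llr μ₁ μ₂ =ᵐ[μ₁] fun x ↦ Real.log (f x) - Real.log (g x) := by
    have hrn := Measure.rnDeriv_withDensity μ₂
      (f := fun x ↦ ENNReal.ofReal (f x / g x)) (by fun_prop)
    rw [← hratio] at hrn
    filter_upwards [hac.ae_le hrn] with x hx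
    rw [llr, hx, ENNReal.toReal_ofReal (div_pos (hf_pos x) (hg_pos x)).le,
      Real.log_div (hf_pos x).ne' (hg_pos x).ne']
  rw [klDiv, if_pos ⟨hac, hfg.congr hllr.symm⟩, integral_congr_ae hllr]

lemma half_sub_le_klFun {x : ℝ} (hx : 0 ≤ x) : 1 / 2 - x ≤ InformationTheory.klFun x := by
  rcases hx.eq_or_lt with rfl | hx
  · norm_num [InformationTheory.klFun]
  have hlog := Real.self_sub_one_le_mul_log (by positivity : 0 ≤ 2 * x)
  rw [Real.log_mul two_ne_zero hx.ne'] at hlog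
  rw [InformationTheory.klFun_apply]
  nlinarith [Real.log_two_lt_d9]

lemma half_measureReal_sub_le_klDiv (μ ν : Measure α) [IsProbabilityMeasure μ]
    [IsProbabilityMeasure ν] {s : Set α} (hs : MeasurableSet s) :
    ((ν.real s / 2 - μ.real s : ℝ) : EReal) ≤ klDiv μ ν := by
  rw [klDiv]
  split_ifs with h
  swap
  · exact le_top
  obtain ⟨hac, hllr⟩ := h
  have hkl := (InformationTheory.integrable_klFun_rnDeriv_iff hac).2 hllr
  have hrn : Integrable (fun x ↦ (μ.rnDeriv ν x).toReal) ν := Measure.integrable_toReal_rnDeriv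
  rw [EReal.coe_le_coe_iff]
  calc ν.real s / 2 - μ.real s
      = ∫ x in s, (1 / 2 - (μ.rnDeriv ν x).toReal) ∂ν := by
        rw [integral_sub (integrable_const _) hrn.restrict, setIntegral_const,
          Measure.setIntegral_toReal_rnDeriv hac, smul_eq_mul]
        ring
    _ ≤ ∫ x in s, InformationTheory.klFun (μ.rnDeriv ν x).toReal ∂ν :=
        setIntegral_mono_on ((integrable_const _).sub hrn).integrableOn hkl.integrableOn hs
          fun x _ ↦ half_sub_le_klFun ENNReal.toReal_nonneg
    _ ≤ ∫ x, InformationTheory.klFun (μ.rnDeriv ν x).toReal ∂ν :=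
        setIntegral_le_integral hkl
          (ae_of_all _ fun x ↦ InformationTheory.klFun_nonneg ENNReal.toReal_nonneg)
    _ = ∫ x, llr μ ν x ∂μ := by
        rw [InformationTheory.integral_klFun_rnDeriv hac hllr]
        simp

end RelativeEntropy

section GaussianDensity

lemma log_gaussianPDFReal {v : ℝ≥0} (hv : v ≠ 0) (m y : ℝ) :
    Real.log (gaussianPDFReal m v y) =
      -(Real.log (2 * Real.pi) + Real.log v) / 2 - (y - m) ^ 2 / (2 * v) := by
  rw [gaussianPDFReal, Real.log_mul (by positivity) (Real.exp_pos _).ne', Real.log_exp,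
    Real.log_inv, Real.log_sqrt (by positivity), Real.log_mul (by positivity) (by positivity)]
  ring

lemma gaussianPDFReal_le_of_abs_sub_le {v : ℝ≥0} {m m' y y' : ℝ} (h : |y - m| ≤ |y' - m'|) :
    gaussianPDFReal m' v y' ≤ gaussianPDFReal m v y := by
  simp only [gaussianPDFReal]
  gcongr _ * Real.exp (?_ / _)
  exact neg_le_neg (sq_le_sq.2 h)

lemma measureReal_gaussianReal {v : ℝ≥0} (hv : v ≠ 0) (m : ℝ) (T : Set ℝ) :
    (gaussianReal m v).real T = ∫ y in T, gaussianPDFReal m v y := by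
  rw [measureReal_def, gaussianReal_apply_eq_integral m hv,
    ENNReal.toReal_ofReal (integral_nonneg fun y ↦ gaussianPDFReal_nonneg m v y)]

lemma mul_gaussianPDFReal_le_measureReal_Icc {v : ℝ≥0} (hv : v ≠ 0) {m a b : ℝ} (hma : m ≤ a)
    (hab : a ≤ b) : (b - a) * gaussianPDFReal m v b ≤ (gaussianReal m v).real (Set.Icc a b) := by
  calc (b - a) * gaussianPDFReal m v b
      = ∫ _ in Set.Icc a b, gaussianPDFReal m v b := by
        rw [setIntegral_const, Real.volume_real_Icc_of_le hab, smul_eq_mul]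
    _ ≤ ∫ y in Set.Icc a b, gaussianPDFReal m v y := by
        refine setIntegral_mono_on (integrableOn_const measure_Icc_lt_top.ne)
          (integrable_gaussianPDFReal m v).integrableOn measurableSet_Icc fun y hy ↦
            gaussianPDFReal_le_of_abs_sub_le ?_
        rw [abs_of_nonneg (by linarith [hy.1]), abs_of_nonneg (by linarith)]
        linarith [hy.2]
    _ = (gaussianReal m v).real (Set.Icc a b) := (measureReal_gaussianReal hv m _).symm

-- At `t = 0` the exponents agree: for `y = A s / (s - 1)`, `y - A = A / (s - 1) = y / s`.
lemma gaussianPDFReal_one_le_mul_exp {s : ℝ≥0} (hs : 1 < s) {A t : ℝ} (ht : 0 ≤ t) :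
    gaussianPDFReal A 1 (A * s / (s - 1) + t) ≤
      s * Real.exp (-(A * t / s)) * gaussianPDFReal 0 (s ^ 2) (A * s / (s - 1) + t) := by
  have hs1 : (1 : ℝ) < s := mod_cast hs
  have hs_sub : (s : ℝ) - 1 ≠ 0 := by linarith
  have hv : s ^ 2 ≠ 0 := by positivity
  have hq := gaussianPDFReal_pos 0 (s ^ 2) (A * s / (s - 1) + t) hv
  have hsq : (t / s) ^ 2 ≤ t ^ 2 := by
    gcongr
    exact div_le_self ht hs1.le
  rw [← Real.log_le_log_iff (gaussianPDFReal_pos _ _ _ one_ne_zero) (by positivity),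
    Real.log_mul (by positivity) hq.ne', Real.log_mul (by positivity) (Real.exp_pos _).ne',
    Real.log_exp, log_gaussianPDFReal one_ne_zero, log_gaussianPDFReal hv]
  push_cast
  rw [Real.log_one, Real.log_pow]
  have hexp : (A * s / (s - 1) + t - A) ^ 2 / (2 * 1) - (A * s / (s - 1) + t - 0) ^ 2 / (2 * s ^ 2)
      = A * t / s + (t ^ 2 - (t / s) ^ 2) / 2 := by
    field_simp
    ring
  linarith

lemma gaussianPDFReal_one_le_quarter_mul {s : ℝ≥0} (hs : 1 < s) {A y : ℝ} (hA : 0 < A)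
    (hy : A * s / (s - 1) + s * Real.log (4 * s) / A ≤ y) :
    gaussianPDFReal A 1 y ≤ 1 / 4 * gaussianPDFReal 0 (s ^ 2) y := by
  have hs1 : (1 : ℝ) < s := mod_cast hs
  obtain ⟨t, rfl⟩ : ∃ t, y = A * s / (s - 1) + t := ⟨y - A * s / (s - 1), by ring⟩
  have ht : s * Real.log (4 * s) / A ≤ t := by linarith
  have ht_nonneg : 0 ≤ t :=
    (div_nonneg (mul_nonneg s.2 (Real.log_nonneg (by linarith))) hA.le).trans ht
  have hlog : Real.log (4 * s) ≤ A * t / s := by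
    rw [div_le_iff₀ hA] at ht
    rw [le_div_iff₀ (by linarith)]
    linarith
  have hfactor : s * Real.exp (-(A * t / s)) ≤ 1 / 4 :=
    calc s * Real.exp (-(A * t / s)) ≤ s * Real.exp (-Real.log (4 * s)) := by gcongr
      _ = 1 / 4 := by
        rw [Real.exp_neg, Real.exp_log (by linarith)]
        field_simp
  exact (gaussianPDFReal_one_le_mul_exp hs ht_nonneg).trans
    (mul_le_mul_of_nonneg_right hfactor (gaussianPDFReal_nonneg _ _ _))

lemma mul_exp_le_gaussianPDFReal_zero {s : ℝ≥0} (hs : 1 < s) {A k : ℝ} (hA : 1 ≤ A) (hk : 0 ≤ k) :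
    gaussianPDFReal 0 (s ^ 2) 0 * Real.exp (-(k / (s * (s - 1)) + k ^ 2 / (2 * s ^ 2))) *
      Real.exp (-A ^ 2 / (2 * (s - 1) ^ 2)) ≤
        gaussianPDFReal 0 (s ^ 2) (A * s / (s - 1) + k / A) := by
  have hs1 : (1 : ℝ) < s := mod_cast hs
  have hs_sub : (s : ℝ) - 1 ≠ 0 := by linarith
  have hkA : (k / A) ^ 2 ≤ k ^ 2 := by
    gcongr
    exact div_le_self hk hA
  have hsq : (A * s / (s - 1) + k / A) ^ 2 / (2 * s ^ 2) =
      A ^ 2 / (2 * (s - 1) ^ 2) + k / (s * (s - 1)) + (k / A) ^ 2 / (2 * s ^ 2) := by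
    field_simp
    ring
  have hk_sq : (k / A) ^ 2 / (2 * s ^ 2) ≤ k ^ 2 / (2 * (s : ℝ) ^ 2) := by gcongr
  simp only [gaussianPDFReal, sub_zero, NNReal.coe_pow]
  rw [mul_assoc, mul_assoc, ← Real.exp_add, ← Real.exp_add]
  gcongr
  rw [neg_div, neg_div, neg_div, hsq]
  linarith [show (0 : ℝ) ^ 2 / (2 * s ^ 2) = 0 by simp]

lemma integrable_sq_gaussianReal (m : ℝ) (v : ℝ≥0) :
    Integrable (fun z ↦ z ^ 2) (gaussianReal m v) :=
  (memLp_id_gaussianReal 2).integrable_sq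

lemma integral_sq_gaussianReal_zero (v : ℝ≥0) : ∫ z, z ^ 2 ∂gaussianReal 0 v = v := by
  have hvar := variance_fun_id_gaussianReal (μ := 0) (v := v)
  rw [variance_eq_integral (by fun_prop)] at hvar
  simpa using hvar

end GaussianDensity

section Channel

/-- The Lebesgue density of the channel output `X + Z`, for `X ~ μ` and `Z ~ N(0,1)` independent of
`X`: the mixture under `μ` of the densities of `N(x,1)`, the output law given the input `x`. -/
noncomputable def outputDensity (μ : Measure ℝ) (y : ℝ) : ℝ := ∫ x, gaussianPDFReal x 1 y ∂μ

variable (μ : Measure ℝ)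

lemma lintegral_jointLaw {f : ℝ × ℝ → ENNReal} (hf : Measurable f) :
    ∫⁻ p, f p ∂jointLaw μ = ∫⁻ x, ∫⁻ y, f (x, y) ∂gaussianReal x 1 ∂μ := by
  rw [jointLaw, lintegral_map hf (by fun_prop), lintegral_prod _ (by fun_prop)]
  refine lintegral_congr fun x ↦ ?_
  have hfiber := gaussianReal_map_const_add (μ := 0) (v := 1) x
  rw [zero_add] at hfiber
  rw [← hfiber, lintegral_map (by fun_prop) (by fun_prop)]

lemma fst_jointLaw : (jointLaw μ).fst = μ := by
  rw [jointLaw, Measure.fst, Measure.map_map (by fun_prop) (by fun_prop)]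
  exact Measure.fst_prod

lemma jointLaw_eq_withDensity [SFinite μ] :
    jointLaw μ =
      (μ.prod volume).withDensity fun p ↦ ENNReal.ofReal (gaussianPDFReal p.1 1 p.2) := by
  refine Measure.ext_of_lintegral _ fun f hf ↦ ?_
  rw [lintegral_jointLaw μ hf, lintegral_withDensity_eq_lintegral_mul _ (by fun_prop) hf,
    lintegral_prod _ (by fun_prop)]
  refine lintegral_congr fun x ↦ ?_
  rw [gaussianReal_of_var_ne_zero x one_ne_zero,
    lintegral_withDensity_eq_lintegral_mul _ (by fun_prop) (by fun_prop)]
  rfl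

lemma integrable_gaussianPDFReal_mean [IsFiniteMeasure μ] (v : ℝ≥0) (y : ℝ) :
    Integrable (fun x ↦ gaussianPDFReal x v y) μ := by
  refine Integrable.of_bound (C := gaussianPDFReal y v y)
    (Measurable.aestronglyMeasurable (by fun_prop)) (ae_of_all _ fun x ↦ ?_)
  rw [Real.norm_of_nonneg (gaussianPDFReal_nonneg _ _ _)]
  exact gaussianPDFReal_le_of_abs_sub_le (by simp)

@[fun_prop]
lemma measurable_outputDensity [SFinite μ] : Measurable (outputDensity μ) :=
  (Measurable.stronglyMeasurable (f := fun p : ℝ × ℝ ↦ gaussianPDFReal p.2 1 p.1)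
    (by fun_prop)).integral_prod_right.measurable

lemma snd_jointLaw [IsFiniteMeasure μ] :
    (jointLaw μ).snd = volume.withDensity fun y ↦ ENNReal.ofReal (outputDensity μ y) := by
  refine Measure.ext_of_lintegral _ fun f hf ↦ ?_
  rw [Measure.snd, lintegral_map hf (by fun_prop), jointLaw_eq_withDensity,
    lintegral_withDensity_eq_lintegral_mul _ (by fun_prop) (by fun_prop),
    lintegral_withDensity_eq_lintegral_mul _ (by fun_prop) (by fun_prop),
    lintegral_prod_symm _ (by fun_prop)]
  refine lintegral_congr fun y ↦ ?_
  simp only [Pi.mul_apply]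
  rw [lintegral_mul_const _ (by fun_prop), outputDensity,
    ofReal_integral_eq_lintegral_ofReal (integrable_gaussianPDFReal_mean μ 1 y)
      (ae_of_all _ fun x ↦ gaussianPDFReal_nonneg _ _ _)]

lemma prod_marginals_jointLaw [IsFiniteMeasure μ] :
    (jointLaw μ).fst.prod (jointLaw μ).snd =
      (μ.prod volume).withDensity fun p ↦ ENNReal.ofReal (outputDensity μ p.2) := by
  rw [fst_jointLaw, snd_jointLaw, prod_withDensity_right (by fun_prop)]

lemma measureReal_snd_jointLaw [IsFiniteMeasure μ] (T : Set ℝ) :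
    (jointLaw μ).snd.real T = ∫ y in T, outputDensity μ y := by
  have hnonneg (y : ℝ) : 0 ≤ outputDensity μ y :=
    integral_nonneg fun x ↦ gaussianPDFReal_nonneg x 1 y
  rw [measureReal_def, snd_jointLaw, withDensity_apply',
    integral_eq_lintegral_of_nonneg_ae (ae_of_all _ hnonneg)
      (Measurable.aestronglyMeasurable (by fun_prop))]

variable [IsProbabilityMeasure μ]

instance isProbabilityMeasure_jointLaw : IsProbabilityMeasure (jointLaw μ) :=
  Measure.isProbabilityMeasure_map (by fun_prop)

lemma outputDensity_le (y : ℝ) : outputDensity μ y ≤ gaussianPDFReal 0 1 0 := by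
  have hle := integral_mono (integrable_gaussianPDFReal_mean μ 1 y) (integrable_const _)
    fun x ↦ gaussianPDFReal_le_of_abs_sub_le (m := 0) (y := 0) (by simp)
  simpa [outputDensity] using hle

lemma outputDensity_le_of_ae_le {A y : ℝ} (hμA : ∀ᵐ x ∂μ, x ≤ A) (hy : A ≤ y) :
    outputDensity μ y ≤ gaussianPDFReal A 1 y := by
  have hle := integral_mono_ae (integrable_gaussianPDFReal_mean μ 1 y) (integrable_const _)
    (hμA.mono fun x hx ↦ gaussianPDFReal_le_of_abs_sub_le (v := 1) (m := A) (m' := x) (y := y)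
      (y' := y) (abs_le_abs_of_nonneg (by linarith) (by linarith)))
  simpa [outputDensity] using hle

lemma exists_pos_mul_exp_neg_sq_le_outputDensity :
    ∃ c > 0, ∀ y, c * Real.exp (-y ^ 2) ≤ outputDensity μ y := by
  have hint : Integrable (fun x : ℝ ↦ Real.exp (-x ^ 2)) μ := by
    refine Integrable.of_bound (C := 1) (by fun_prop) (ae_of_all _ fun x ↦ ?_)
    rw [Real.norm_of_nonneg (Real.exp_pos _).le, Real.exp_le_one_iff]
    nlinarith
  refine ⟨gaussianPDFReal 0 1 0 * ∫ x, Real.exp (-x ^ 2) ∂μ,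
    mul_pos (gaussianPDFReal_pos _ _ _ one_ne_zero) (integral_exp_pos hint), fun y ↦ ?_⟩
  rw [mul_right_comm, ← integral_const_mul]
  refine integral_mono (hint.const_mul _) (integrable_gaussianPDFReal_mean μ 1 y) fun x ↦ ?_
  simp only [gaussianPDFReal]
  rw [mul_assoc, mul_assoc, ← Real.exp_add, ← Real.exp_add]
  gcongr
  simp only [NNReal.coe_one]
  nlinarith [sq_nonneg (y + x)]

lemma outputDensity_pos (y : ℝ) : 0 < outputDensity μ y := by
  obtain ⟨c, hc, hle⟩ := exists_pos_mul_exp_neg_sq_le_outputDensity μ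
  exact (mul_pos hc (Real.exp_pos _)).trans_le (hle y)

variable {μ}

lemma integrable_noise_sq : Integrable (fun p : ℝ × ℝ ↦ (p.2 - p.1) ^ 2) (jointLaw μ) := by
  rw [jointLaw, integrable_map_measure (by fun_prop) (by fun_prop)]
  simpa [Function.comp_def] using (integrable_sq_gaussianReal 0 1).comp_snd μ

lemma integral_noise_sq : ∫ p : ℝ × ℝ, (p.2 - p.1) ^ 2 ∂jointLaw μ = 1 := by
  rw [jointLaw, integral_map (by fun_prop) (by fun_prop)]
  simp only [add_sub_cancel_left]
  rw [integral_fun_snd fun z : ℝ ↦ z ^ 2, integral_sq_gaussianReal_zero]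
  simp

lemma integrable_output_sq (hμ : Integrable (fun x ↦ x ^ 2) μ) :
    Integrable (fun y ↦ y ^ 2) (jointLaw μ).snd := by
  have hX : MemLp (fun p : ℝ × ℝ ↦ p.1) 2 (μ.prod (gaussianReal 0 1)) :=
    ((memLp_two_iff_integrable_sq (by fun_prop)).2 hμ).comp_fst _
  have hZ : MemLp (fun p : ℝ × ℝ ↦ p.2) 2 (μ.prod (gaussianReal 0 1)) :=
    (memLp_id_gaussianReal 2).comp_snd _
  rw [Measure.snd, jointLaw, Measure.map_map (by fun_prop) (by fun_prop),
    integrable_map_measure (by fun_prop) (by fun_prop)]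
  exact (hX.add hZ).integrable_sq

lemma integral_output_sq (hμ : Integrable (fun x ↦ x ^ 2) μ) :
    ∫ y, y ^ 2 ∂(jointLaw μ).snd = ∫ x, x ^ 2 ∂μ + 1 := by
  have hX : Integrable (fun x ↦ x) μ :=
    ((memLp_two_iff_integrable_sq (by fun_prop)).2 hμ).integrable one_le_two
  have hZ : Integrable (fun z ↦ z) (gaussianReal 0 1) :=
    (memLp_id_gaussianReal 1).integrable le_rfl
  have hXX : Integrable (fun p : ℝ × ℝ ↦ p.1 ^ 2) (μ.prod (gaussianReal 0 1)) := hμ.comp_fst _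
  have hXZ : Integrable (fun p : ℝ × ℝ ↦ 2 * (p.1 * p.2)) (μ.prod (gaussianReal 0 1)) :=
    (hX.mul_prod hZ).const_mul 2
  have hZZ : Integrable (fun p : ℝ × ℝ ↦ p.2 ^ 2) (μ.prod (gaussianReal 0 1)) :=
    (integrable_sq_gaussianReal 0 1).comp_snd _
  have hXX_XZ : Integrable (fun p : ℝ × ℝ ↦ p.1 ^ 2 + 2 * (p.1 * p.2))
      (μ.prod (gaussianReal 0 1)) := hXX.add hXZ
  calc ∫ y, y ^ 2 ∂(jointLaw μ).snd
      = ∫ p : ℝ × ℝ, (p.1 ^ 2 + 2 * (p.1 * p.2) + p.2 ^ 2) ∂μ.prod (gaussianReal 0 1) := by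
        rw [Measure.snd, jointLaw, Measure.map_map (by fun_prop) (by fun_prop),
          integral_map (by fun_prop) (by fun_prop)]
        congr with p
        simp only [Function.comp_apply]
        ring
    _ = ∫ x, x ^ 2 ∂μ + 2 * ((∫ x, x ∂μ) * ∫ z, z ∂gaussianReal 0 1)
          + ∫ z, z ^ 2 ∂gaussianReal 0 1 := by
        rw [integral_add hXX_XZ hZZ, integral_add hXX hXZ, integral_const_mul,
          integral_prod_mul (fun x : ℝ ↦ x) (fun z : ℝ ↦ z),
          integral_fun_fst (fun x : ℝ ↦ x ^ 2), integral_fun_snd (fun z : ℝ ↦ z ^ 2)]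
        simp
    _ = ∫ x, x ^ 2 ∂μ + 1 := by
        simp [integral_sq_gaussianReal_zero]

lemma integrable_log_outputDensity (hμ : Integrable (fun x ↦ x ^ 2) μ) :
    Integrable (fun y ↦ Real.log (outputDensity μ y)) (jointLaw μ).snd := by
  obtain ⟨c, hc, hlower⟩ := exists_pos_mul_exp_neg_sq_le_outputDensity μ
  set b := Real.log (gaussianPDFReal 0 1 0)
  refine ((integrable_const (|Real.log c| + |b|)).add (integrable_output_sq hμ)).mono'
    (Measurable.aestronglyMeasurable (by fun_prop)) (ae_of_all _ fun y ↦ ?_)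
  have hlog_lower := Real.log_le_log (by positivity) (hlower y)
  rw [Real.log_mul hc.ne' (Real.exp_pos _).ne', Real.log_exp] at hlog_lower
  have hlog_upper : Real.log (outputDensity μ y) ≤ b :=
    Real.log_le_log (outputDensity_pos μ y) (outputDensity_le μ y)
  rw [Pi.add_apply, Real.norm_eq_abs, abs_le]
  constructor <;>
    nlinarith [neg_abs_le (Real.log c), le_abs_self b, abs_nonneg (Real.log c), abs_nonneg b]

lemma integrable_log_noise :
    Integrable (fun p : ℝ × ℝ ↦ Real.log (gaussianPDFReal p.1 1 p.2)) (jointLaw μ) := by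
  simp_rw [log_gaussianPDFReal one_ne_zero]
  exact (integrable_const _).sub (integrable_noise_sq.div_const _)

lemma integral_log_noise :
    ∫ p : ℝ × ℝ, Real.log (gaussianPDFReal p.1 1 p.2) ∂jointLaw μ =
      -(Real.log (2 * Real.pi) + 1) / 2 := by
  simp_rw [log_gaussianPDFReal one_ne_zero]
  rw [integral_sub (integrable_const _) (integrable_noise_sq.div_const _), integral_const,
    integral_div, integral_noise_sq]
  simp only [probReal_univ, one_smul, NNReal.coe_one, Real.log_one]
  ring

lemma integrable_log_gaussianPDFReal_output (hμ : Integrable (fun x ↦ x ^ 2) μ) {v : ℝ≥0}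
    (hv : v ≠ 0) :
    Integrable (fun y ↦ Real.log (gaussianPDFReal 0 v y)) (jointLaw μ).snd := by
  simp_rw [log_gaussianPDFReal hv, sub_zero]
  exact (integrable_const _).sub ((integrable_output_sq hμ).div_const _)

lemma integral_log_gaussianPDFReal_output (hμ : Integrable (fun x ↦ x ^ 2) μ) {v : ℝ≥0}
    (hv : v ≠ 0) :
    ∫ y, Real.log (gaussianPDFReal 0 v y) ∂(jointLaw μ).snd =
      -(Real.log (2 * Real.pi) + Real.log v) / 2 - (∫ x, x ^ 2 ∂μ + 1) / (2 * v) := by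
  simp_rw [log_gaussianPDFReal hv, sub_zero]
  rw [integral_sub (integrable_const _) ((integrable_output_sq hμ).div_const _), integral_const,
    integral_div, integral_output_sq hμ]
  simp

lemma mutInfo_eq_integral (hμ : Integrable (fun x ↦ x ^ 2) μ) :
    mutInfo μ = ((-(Real.log (2 * Real.pi) + 1) / 2
      - ∫ y, Real.log (outputDensity μ y) ∂(jointLaw μ).snd : ℝ) : EReal) := by
  have hlog := integrable_log_outputDensity hμ
  have hlog_joint : Integrable (fun p : ℝ × ℝ ↦ Real.log (outputDensity μ p.2)) (jointLaw μ) := by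
    rw [Measure.snd] at hlog
    exact hlog.comp_measurable measurable_snd
  have hint := integrable_log_noise.sub hlog_joint
  rw [mutInfo, prod_marginals_jointLaw]
  nth_rw 1 [jointLaw_eq_withDensity]
  rw [klDiv_withDensity_withDensity (f := fun p : ℝ × ℝ ↦ gaussianPDFReal p.1 1 p.2)
    (g := fun p ↦ outputDensity μ p.2) (by fun_prop) (by fun_prop)
    (fun p ↦ gaussianPDFReal_pos _ _ _ one_ne_zero) (fun p ↦ outputDensity_pos μ p.2)
    (jointLaw_eq_withDensity μ ▸ hint), ← jointLaw_eq_withDensity,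
    integral_sub integrable_log_noise hlog_joint, integral_log_noise, Measure.snd,
    integral_map (by fun_prop) (Measurable.aestronglyMeasurable (by fun_prop))]

lemma klDiv_output_gaussianReal (hμ : Integrable (fun x ↦ x ^ 2) μ) {v : ℝ≥0} (hv : v ≠ 0) :
    klDiv (jointLaw μ).snd (gaussianReal 0 v) =
      ((∫ y, Real.log (outputDensity μ y) ∂(jointLaw μ).snd
        - ∫ y, Real.log (gaussianPDFReal 0 v y) ∂(jointLaw μ).snd : ℝ) : EReal) := by
  have hlog := integrable_log_outputDensity hμ
  have hlog_gaussian := integrable_log_gaussianPDFReal_output hμ hv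
  rw [← integral_sub hlog hlog_gaussian]
  have hint := hlog.sub hlog_gaussian
  rw [snd_jointLaw] at hint ⊢
  rw [gaussianReal_of_var_ne_zero 0 hv]
  exact klDiv_withDensity_withDensity (by fun_prop) (by fun_prop) (outputDensity_pos μ)
    (fun y ↦ gaussianPDFReal_pos 0 v y hv) hint

lemma mutInfo_eq_sub_klDiv (hμ : Integrable (fun x ↦ x ^ 2) μ) {v : ℝ≥0} (hv : v ≠ 0) :
    mutInfo μ = ((Real.log v / 2 + (∫ x, x ^ 2 ∂μ + 1 - v) / (2 * v) : ℝ) : EReal)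
      - klDiv (jointLaw μ).snd (gaussianReal 0 v) := by
  have hv_pos : (v : ℝ) ≠ 0 := by positivity
  rw [mutInfo_eq_integral hμ, klDiv_output_gaussianReal hμ hv,
    integral_log_gaussianPDFReal_output hμ hv, ← EReal.coe_sub, EReal.coe_eq_coe_iff]
  field_simp
  ring

lemma measureReal_output_le {A r : ℝ} (hμA : ∀ᵐ x ∂μ, x ≤ A) {v : ℝ≥0} (hv : v ≠ 0) {T : Set ℝ}
    (hT : MeasurableSet T) (hTA : ∀ y ∈ T, A ≤ y)
    (hr : ∀ y ∈ T, gaussianPDFReal A 1 y ≤ r * gaussianPDFReal 0 v y) :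
    (jointLaw μ).snd.real T ≤ r * (gaussianReal 0 v).real T := by
  rw [measureReal_snd_jointLaw, measureReal_gaussianReal hv, ← integral_const_mul]
  refine integral_mono_of_nonneg (ae_of_all _ fun y ↦ (outputDensity_pos μ y).le)
    ((integrable_gaussianPDFReal 0 v).restrict.const_mul r) ?_
  filter_upwards [ae_restrict_mem hT] with y hy
  exact (outputDensity_le_of_ae_le μ hμA (hTA y hy)).trans (hr y hy)

end Channel

section Capacity

lemma CAP_le_sub_measureReal {A P : ℝ} {v : ℝ≥0} (hv : v ≠ 0) (hP : P + 1 ≤ v) {T : Set ℝ}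
    (hT : MeasurableSet T) (hTA : ∀ y ∈ T, A ≤ y)
    (hq : ∀ y ∈ T, gaussianPDFReal A 1 y ≤ 1 / 4 * gaussianPDFReal 0 v y) :
    CAP A P ≤ ((Real.log v / 2 - (gaussianReal 0 v).real T / 4 : ℝ) : EReal) := by
  refine iSup₂_le fun μ ⟨_, hsupp, hpow⟩ ↦ ?_
  have hμA : ∀ᵐ x ∂μ, |x| ≤ A := by simpa [ae_iff] using hsupp
  have hμ : Integrable (fun x ↦ x ^ 2) μ :=
    Integrable.of_bound (C := A ^ 2) (by fun_prop) <| hμA.mono fun x hx ↦ by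
      rw [norm_pow]
      exact pow_le_pow_left₀ (norm_nonneg x) hx 2
  have hT_out : (jointLaw μ).snd.real T ≤ 1 / 4 * (gaussianReal 0 v).real T :=
    measureReal_output_le (hμA.mono fun x hx ↦ (le_abs_self x).trans hx) hv hT hTA hq
  have hkl : (((gaussianReal 0 v).real T / 4 : ℝ) : EReal) ≤
      klDiv (jointLaw μ).snd (gaussianReal 0 v) :=
    le_trans (EReal.coe_le_coe_iff.2 (by linarith)) (half_measureReal_sub_le_klDiv _ _ hT)
  have hpow_term : (∫ x, x ^ 2 ∂μ + 1 - v) / (2 * v) ≤ 0 :=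
    div_nonpos_of_nonpos_of_nonneg (by linarith) (by positivity)
  rw [mutInfo_eq_sub_klDiv hμ hv, EReal.coe_sub]
  exact EReal.sub_le_sub (EReal.coe_le_coe_iff.2 (by linarith)) hkl

lemma CAP_le_sub_gaussianPDFReal {A P : ℝ} (hA : 0 < A) {s : ℝ≥0} (hs : 1 < s)
    (hP : P + 1 ≤ s ^ 2) :
    CAP A P ≤ ((Real.log (s ^ 2) / 2 - A⁻¹ *
      gaussianPDFReal 0 (s ^ 2) (A * s / (s - 1) + (s * Real.log (4 * s) + 1) / A) / 4 : ℝ)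
        : EReal) := by
  have hs1 : (1 : ℝ) < s := mod_cast hs
  have hs_sub : (0 : ℝ) < s - 1 := by linarith
  have hv : s ^ 2 ≠ 0 := by positivity
  set a : ℝ := A * s / (s - 1) + s * Real.log (4 * s) / A with ha
  set b : ℝ := A * s / (s - 1) + (s * Real.log (4 * s) + 1) / A with hb
  have hab : b - a = A⁻¹ := by rw [ha, hb]; ring
  have hAa : A ≤ a := by
    have hA_le : A ≤ A * s / (s - 1) := by
      rw [le_div_iff₀ hs_sub]
      nlinarith
    have hlog : 0 ≤ Real.log (4 * s) := Real.log_nonneg (by linarith)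
    exact hA_le.trans (le_add_of_nonneg_right (by positivity))
  have hmass := mul_gaussianPDFReal_le_measureReal_Icc hv (m := 0) (hA.le.trans hAa)
    (b := b) (by linarith [inv_pos.2 hA])
  rw [hab] at hmass
  refine (CAP_le_sub_measureReal hv (by exact_mod_cast hP) (measurableSet_Icc (a := a) (b := b))
    (fun y hy ↦ hAa.trans hy.1)
    fun y hy ↦ gaussianPDFReal_one_le_quarter_mul hs hA hy.1).trans ?_
  rw [EReal.coe_le_coe_iff, NNReal.coe_pow]
  linarith

end Capacity

theorem smith_capacity_gap_lower_general (P : ℝ) (hP : 0 < P) :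
    ∃ c > (0 : ℝ), ∀ A : ℝ, 1 ≤ A →
      ((c * A⁻¹ * Real.exp (-(A ^ 2) / (2 * (Real.sqrt (1 + P) - 1) ^ 2)) : ℝ) : EReal) ≤
        (((1 / 2) * Real.log (1 + P) : ℝ) : EReal) - CAP A P := by
  obtain ⟨s, hs⟩ : ∃ s : ℝ≥0, (s : ℝ) = Real.sqrt (1 + P) := ⟨⟨_, Real.sqrt_nonneg _⟩, rfl⟩
  have hs_sq : (s : ℝ) ^ 2 = 1 + P := hs ▸ Real.sq_sqrt (by linarith)
  have hs1 : 1 < (s : ℝ) := by rw [hs, Real.lt_sqrt zero_le_one]; linarith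
  set k := s * Real.log (4 * s) + 1
  have hk : 0 ≤ k := by
    have := Real.log_nonneg (by linarith : 1 ≤ 4 * (s : ℝ))
    positivity
  set c := gaussianPDFReal 0 (s ^ 2) 0 * Real.exp (-(k / (s * (s - 1)) + k ^ 2 / (2 * s ^ 2)))
  have hc : 0 < c :=
    mul_pos (gaussianPDFReal_pos _ _ _ (pow_ne_zero 2 (by rintro rfl; norm_num at hs1)))
      (Real.exp_pos _)
  refine ⟨c / 4, by positivity, fun A hA ↦ ?_⟩
  have hcap := CAP_le_sub_gaussianPDFReal (by linarith : 0 < A) (mod_cast hs1)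
    (by linarith : P + 1 ≤ (s : ℝ) ^ 2)
  have hpdf := mul_exp_le_gaussianPDFReal_zero (s := s) (mod_cast hs1) hA hk
  refine le_trans ?_ (EReal.sub_le_sub le_rfl hcap)
  rw [← EReal.coe_sub, EReal.coe_le_coe_iff, ← hs, hs_sq]
  have hmul := mul_le_mul_of_nonneg_left hpdf (by positivity : 0 ≤ A⁻¹ / 4)
  linarith

/-- For fixed `P > 0` there are `c > 0` and `A₀ > 0` such that for all
`A ≥ A₀` the gap between the unconstrained AWGN capacity `(1/2)ln(1+P)` and the
amplitude-constrained capacity `C(A,P)` is at least `c · A⁻² · exp(-A²/(√(1+P)-1)²)`. -/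
theorem smith_capacity_gap_lower
    (P : ℝ) (hP : 0 < P) :
    ∃ c > (0 : ℝ), ∃ A₀ > (0 : ℝ), ∀ A : ℝ, A₀ ≤ A →
      ((c * (A ^ 2)⁻¹ * Real.exp (-(A ^ 2) / (Real.sqrt (1 + P) - 1) ^ 2) : ℝ) : EReal) ≤
        (((1 / 2) * Real.log (1 + P) : ℝ) : EReal) - CAP A P := by
  obtain ⟨c, hc, hgap⟩ := smith_capacity_gap_lower_general P hP
  refine ⟨c, hc, 1, one_pos, fun A hA ↦ (EReal.coe_le_coe_iff.2 ?_).trans (hgap A hA)⟩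
  gcongr c * ?_ * Real.exp ?_
  · exact inv_anti₀ (by linarith) (by nlinarith)
  · rw [neg_div, neg_div, neg_le_neg_iff, mul_comm, ← div_div]
    exact half_le_self (by positivity)
end
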